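/- Closed form for the Tetris function: let x ∈ ℤ_{≥0}^n be a nondecreasing position (x_1 ≤ ⋯ ≤ x_n) of Nim^=_{n,k}. Set s = Σ_{i=1}^{n−k} x_i; for i = 1, …, k−1 set y_i = x_{n−k+i+1} − x_{n−k+i}; set s_0 = 0 and s_i = s_{i−1} + i·y_i for i = 1, …, k−1. Let ℓ ∈ {0, …, k−1} be the unique index such that s_ℓ ≤ s and (ℓ = k−1 or s < s_{ℓ+1}), let a = s − s_ℓ and α = ⌊a/(ℓ+1)⌋. Then T_{n,k}(x) = x_{n−k+ℓ+1} + α. -/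

import Mathlib

/-- A move in Exact k-Nim `Nim^=_{n,k}`: all piles weakly decrease and
exactly `k` piles strictly decrease. -/
def ExactMove (n k : ℕ) (x x' : Fin n → ℕ) : Prop :=
  (∀ i, x' i ≤ x i) ∧ (Finset.univ.filter fun i => x' i < x i).card = k

/-- There is a chain of `m` consecutive moves starting at `x`. -/
def HasChain (n k : ℕ) (x : Fin n → ℕ) (m : ℕ) : Prop :=
  ∃ f : Fin (m + 1) → Fin n → ℕ, f 0 = x ∧
    ∀ i : Fin m, ExactMove n k (f i.castSucc) (f i.succ)

/-- The Tetris function `T_{n,k}(x)`: the maximum number of consecutive moves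
that can be made starting from `x`. -/
noncomputable def tetris (n k : ℕ) (x : Fin n → ℕ) : ℕ :=
  sSup {m | HasChain n k x m}

lemma hasChain_zero (n k : ℕ) (x : Fin n → ℕ) : HasChain n k x 0 :=
  ⟨fun _ => x, rfl, fun i => i.elim0⟩

lemma hasChain_succ (n k : ℕ) (x : Fin n → ℕ) (m : ℕ) :
    HasChain n k x (m + 1) ↔ ∃ x', ExactMove n k x x' ∧ HasChain n k x' m := by
  constructor
  · rintro ⟨f, h0, hf⟩
    refine ⟨f 1, ?_, fun i => f i.succ, rfl, fun i => ?_⟩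
    · have := hf 0
      simpa [h0] using this
    · have := hf i.succ
      simpa using this
  · rintro ⟨x', hm, f, h0, hf⟩
    refine ⟨Fin.cons x f, rfl, fun i => ?_⟩
    refine Fin.cases ?_ (fun j => ?_) i
    · simpa [h0] using hm
    · have := hf j
      simpa [← Fin.succ_castSucc] using this

lemma chain_necessary (n k m : ℕ) : ∀ (x : Fin n → ℕ), HasChain n k x m →
    k * m ≤ ∑ i, min (x i) m := by
  induction m with
  | zero => intro x _; simp
  | succ m ih =>
    intro x hx
    obtain ⟨x', ⟨hle, hc⟩, hch⟩ := (hasChain_succ n k x m).1 hx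
    have h1 := ih x' hch
    have h2 : ∑ i, (min (x' i) m + if x' i < x i then 1 else 0) ≤ ∑ i, min (x i) (m+1) := by
      apply Finset.sum_le_sum
      intro i _
      have := hle i
      split_ifs <;> omega
    rw [Finset.sum_add_distrib, ← Finset.card_filter, hc] at h2
    rw [Nat.mul_succ]
    omega

lemma chain_sufficient (n k m : ℕ) : ∀ (x : Fin n → ℕ),
    k * m ≤ ∑ i, min (x i) m → HasChain n k x m := by
  induction m with
  | zero => intro x _; exact hasChain_zero n k x
  | succ m ih =>
    intro x hx
    rw [hasChain_succ]
    suffices h : ∃ A : Finset (Fin n), A.card = k ∧ (∀ i ∈ A, 1 ≤ x i) ∧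
        k * m ≤ ∑ i, min (x i - if i ∈ A then 1 else 0) m by
      obtain ⟨A, hA, hpos, hsum⟩ := h
      refine ⟨fun i => x i - if i ∈ A then 1 else 0, ⟨fun i => Nat.sub_le _ _, ?_⟩, ih _ hsum⟩
      rw [← hA]
      congr 1
      ext i
      simp only [Finset.mem_filter, Finset.mem_univ, true_and]
      constructor
      · intro h; by_contra hi; simp [hi] at h
      · intro h; have := hpos i h; simp only [h, if_true]; omega
    by_cases hB : k ≤ (Finset.univ.filter fun i => m + 1 ≤ x i).card
    · obtain ⟨A, hAB, hA⟩ := Finset.exists_subset_card_eq hB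
      have hA' : ∀ i ∈ A, m + 1 ≤ x i := fun i hi => by simpa using hAB hi
      refine ⟨A, hA, fun i hi => by have := hA' i hi; omega, ?_⟩
      calc k * m = ∑ i ∈ A, m := by simp [hA]
        _ ≤ ∑ i ∈ A, min (x i - if i ∈ A then 1 else 0) m := by
          apply Finset.sum_le_sum
          intro i hi
          have := hA' i hi
          simp only [hi, if_true]; omega
        _ ≤ _ := Finset.sum_le_sum_of_subset (Finset.subset_univ A)
    · have hP : k ≤ (Finset.univ.filter fun i => 1 ≤ x i).card := by
        have h1 : ∑ i, min (x i) (m+1) ≤ ∑ i, (if 1 ≤ x i then 1 else 0) * (m+1) := by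
          apply Finset.sum_le_sum
          intro i _
          split_ifs <;> omega
        rw [← Finset.sum_mul, ← Finset.card_filter] at h1
        exact Nat.le_of_mul_le_mul_right (hx.trans h1) (Nat.succ_pos m)
      have hsub : (Finset.univ.filter fun i => m + 1 ≤ x i) ⊆
          (Finset.univ.filter fun i => 1 ≤ x i) := by
        intro i; simp; omega
      obtain ⟨A, hBA, hAP, hA⟩ := Finset.exists_subsuperset_card_eq hsub (by omega) hP
      have hA' : ∀ i ∈ A, 1 ≤ x i := fun i hi => by simpa using hAP hi
      refine ⟨A, hA, hA', ?_⟩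
      have h2 : ∑ i, min (x i) (m+1) ≤
          ∑ i, (min (x i - if i ∈ A then 1 else 0) m + if i ∈ A then 1 else 0) := by
        apply Finset.sum_le_sum
        intro i _
        by_cases hi : i ∈ A
        · have := hA' i hi
          simp only [hi, if_true]; omega
        · have : ¬ (m + 1 ≤ x i) := fun h => hi (hBA (by simpa using h))
          simp only [hi, if_false]; omega
      rw [Finset.sum_add_distrib, ← Finset.card_filter] at h2
      have h3 : (Finset.univ.filter fun i => i ∈ A).card = k := by simp [hA]
      rw [h3] at h2
      rw [Nat.mul_succ] at hx
      omega

/-- Closed form for the Tetris function of a nondecreasing position `x`: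
with `s = Σ_{i<n-k} xᵢ`, `S 0 = 0`, `S i = S (i-1) + i·(x_{n-k+i} - x_{n-k+i-1})`
(0-based indices) for `1 ≤ i ≤ k-1`, and `ℓ` the unique index with `S ℓ ≤ s` and
(`ℓ = k-1` or `s < S (ℓ+1)`), putting `a = s - S ℓ` and `α = ⌊a/(ℓ+1)⌋`, we have
`T_{n,k}(x) = x_{n-k+ℓ} + α` (0-based index `n-k+ℓ`). -/
theorem tetris_closed_form (n k : ℕ) (hk1 : 1 ≤ k) (hkn : k ≤ n)
    (x : Fin n → ℕ) (hmono : Monotone x)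
    (s : ℕ) (hs : s = ∑ i ∈ Finset.univ.filter (fun i : Fin n => (i : ℕ) < n - k), x i)
    (S : ℕ → ℕ) (hS0 : S 0 = 0)
    (hS : ∀ (i : ℕ) (_hi1 : 1 ≤ i) (_hi2 : i ≤ k - 1),
      S i = S (i - 1) + i * (x ⟨n - k + i, by omega⟩ - x ⟨n - k + i - 1, by omega⟩))
    (ℓ : ℕ) (hℓ : ℓ ≤ k - 1) (hsℓ : S ℓ ≤ s) (hℓtop : ℓ = k - 1 ∨ s < S (ℓ + 1))
    (a : ℕ) (ha : a = s - S ℓ) (α : ℕ) (hα : α = a / (ℓ + 1)) :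
    tetris n k x = x ⟨n - k + ℓ, by omega⟩ + α := by
  obtain ⟨X, hX⟩ : ∃ X : ℕ → ℕ, ∀ i : Fin n, x i = X i :=
    ⟨fun i => if h : i < n then x ⟨i, h⟩ else 0, fun i => by simp⟩
  have hXm : ∀ i j, i ≤ j → j < n → X i ≤ X j := by
    intro i j hij hj
    have := hmono (show (⟨i, by omega⟩ : Fin n) ≤ ⟨j, hj⟩ from hij)
    simpa [hX] using this
  have hs' : s = ∑ i ∈ Finset.range (n - k), X i := by
    rw [hs, Finset.sum_filter]
    simp only [hX]
    rw [Fin.sum_univ_eq_sum_range (fun i => if i < n - k then X i else 0) n,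
      ← Finset.sum_filter]
    congr 1
    ext i; simp; omega
  simp only [hX] at hS ⊢
  have hinv : ∀ i, i ≤ k - 1 →
      S i + ∑ j ∈ Finset.range (n - k + i), X j = s + i * X (n - k + i) := by
    intro i
    induction i with
    | zero => intro _; simp [hS0, hs']
    | succ i ih =>
      intro hi
      have h1 := ih (by omega)
      have h2 := hS (i+1) (by omega) hi
      simp only [Nat.add_sub_cancel, ← Nat.add_assoc] at h2
      have h3 := hXm (n - k + i) (n - k + i + 1) (by omega) (by omega)
      rw [← Nat.add_assoc, Finset.sum_range_succ, h2]
      obtain ⟨d, hd⟩ := Nat.exists_eq_add_of_le h3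
      rw [hd, Nat.add_sub_cancel_left]
      linarith [h1]
  have hdm := Nat.div_add_mod a (ℓ + 1)
  have hml : a % (ℓ + 1) < ℓ + 1 := Nat.mod_lt a (Nat.succ_pos ℓ)
  rw [← hα] at hdm
  have hPl := hinv ℓ hℓ
  -- prefix sum through index n-k+ℓ
  obtain ⟨Q, hQ⟩ : ∃ Q, Q = ∑ j ∈ Finset.range (n - k + ℓ + 1), X j := ⟨_, rfl⟩
  have hQ1 : S ℓ + Q = s + (ℓ + 1) * X (n - k + ℓ) := by
    rw [hQ, Finset.sum_range_succ]; linarith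
  have has : s = a + S ℓ := by omega
  have hlo : (ℓ + 1) * (X (n - k + ℓ) + α) ≤ Q := by
    rw [Nat.mul_add]; omega
  have hhi : Q < (ℓ + 1) * (X (n - k + ℓ) + α + 1) := by
    rw [Nat.mul_add, Nat.mul_add]; omega
  have hn : n = (n - k + ℓ + 1) + (k - 1 - ℓ) := by omega
  have hk : k = (ℓ + 1) + (k - 1 - ℓ) := by omega
  obtain ⟨r, hr⟩ : ∃ r, r = k - 1 - ℓ := ⟨_, rfl⟩
  rw [← hr] at hn hk
  have hsplit : ∀ m, ∑ i, min (x i) m = ∑ i ∈ Finset.range (n - k + ℓ + 1), min (X i) m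
      + ∑ j ∈ Finset.range r, min (X (n - k + ℓ + 1 + j)) m := by
    intro m
    simp only [hX]
    rw [Fin.sum_univ_eq_sum_range (fun i => min (X i) m) n, ← Finset.sum_range_add, ← hn]
  have hmax : IsGreatest {m | HasChain n k x m} (X (n - k + ℓ) + α) := by
    constructor
    · apply chain_sufficient
      rw [hsplit]
      have e1 : ∑ i ∈ Finset.range (n - k + ℓ + 1), min (X i) (X (n - k + ℓ) + α) = Q := by
        rw [hQ]
        apply Finset.sum_congr rfl
        intro i hi
        have := hXm i (n - k + ℓ) (by simp at hi; omega) (by omega)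
        omega
      have e2 : ∑ j ∈ Finset.range r, min (X (n - k + ℓ + 1 + j)) (X (n - k + ℓ) + α)
          = ∑ j ∈ Finset.range r, (X (n - k + ℓ) + α) := by
        apply Finset.sum_congr rfl
        intro j hj
        have hj' : j < r := by simpa using hj
        have h4 := hXm (n - k + ℓ + 1) (n - k + ℓ + 1 + j) (by omega) (by omega)
        have h5 : s < S (ℓ + 1) := by
          rcases hℓtop with h | h
          · omega
          · exact h
        have h6 := hinv (ℓ + 1) (by omega)
        rw [← Nat.add_assoc, ← hQ] at h6
        have h7 : (ℓ + 1) * (X (n - k + ℓ) + α) < (ℓ + 1) * X (n - k + ℓ + 1) := by omega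
        have h8 := Nat.lt_of_mul_lt_mul_left h7
        omega
      rw [e1, e2, Finset.sum_const, Finset.card_range, smul_eq_mul]
      calc k * (X (n - k + ℓ) + α)
          = (ℓ + 1) * (X (n - k + ℓ) + α) + r * (X (n - k + ℓ) + α) := by
            rw [← Nat.add_mul, ← hk]
        _ ≤ _ := by omega
    · intro m hm
      have h1 := chain_necessary n k m x hm
      rw [hsplit] at h1
      by_contra hlt
      have e1 : ∑ i ∈ Finset.range (n - k + ℓ + 1), min (X i) m ≤ Q := by
        rw [hQ]
        exact Finset.sum_le_sum fun i _ => min_le_left _ _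
      have e2 : ∑ j ∈ Finset.range r, min (X (n - k + ℓ + 1 + j)) m
          ≤ ∑ j ∈ Finset.range r, m := Finset.sum_le_sum fun i _ => min_le_right _ _
      rw [Finset.sum_const, Finset.card_range, smul_eq_mul] at e2
      have e3 : (ℓ + 1) * (X (n - k + ℓ) + α + 1) ≤ (ℓ + 1) * m :=
        Nat.mul_le_mul_left _ (by omega)
      have e4 : k * m = (ℓ + 1) * m + r * m := by rw [← Nat.add_mul, ← hk]
      omega
  exact hmax.csSup_eq
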